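/- (Local control of the Gaussian process on variable-selection models, used in the proof of Theorem 3 to show φ_m(x) = x√D_m.) Let ζ ∈ ℝ^{T×p} have i.i.d. standard Gaussian N(0,1) entries, set W(g) := Tr(ζᵀ g)/T, and equip ℝ^{T×p} with the norm ‖g‖_H := ‖g‖_F/√T. Fix a segmentation τ ∈ 𝒯 and a nonempty subset J ⊆ {1,…,p}, and let S_{(J,τ)} := {μ ∈ F_τ : for every segment l, the support of μ_{τ_l} is contained in J}. Then for every h ∈ S_{(J,τ)} and every x > 0 (with the convention that the ratio is 0 when g = h): 2 · E[ sup_{g ∈ S_{(J,τ)}} ( W(g) − W(h) ) / ( ‖g − h‖_H² + x² ) ] ≤ √|J| / x. -/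

import Mathlib

/-! Write `u = g - h`, which is supported on the columns in `J`. Cauchy-Schwarz gives
`⟪ζ, u⟫ ≤ √N ‖u‖_F` with `N = ∑ t, ∑ i ∈ J, ζ t i ^ 2`, and `r / (r² + T x²) ≤ 1 / (2 x √T)`
bounds the ratio by `√N / (2 x √T)`, uniformly in `g` (`ratio_le`). Since
`E N = T |J|`, the bound follows from `E √N ≤ √(E N)`; concretely `√N ≤ (N / c + c) / 2` with
`c = √(T |J|)`, so that only the second moment of a standard Gaussian is needed.
The projection onto `F_τ` plays no role, because it could only lower the dimension
`T |J|` to `D_τ |J|`, and the claimed bound already allows for `T |J|`. -/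

open MeasureTheory ProbabilityTheory Real

/-- A segmentation `τ = {τ₀, τ₁, …, τ_D}` of `{0,…,T}`, with
`0 = τ₀ < τ₁ < ⋯ < τ_D = T`.  `D` is the number of segments and `pts l = τ_l`
(we use the canonical representation `pts l = T` for every `l ≥ D`). -/
structure Segmentation (T : ℕ) where
  D : ℕ
  pts : ℕ → ℕ
  D_pos : 0 < D
  mono : ∀ l, l < D → pts l < pts (l + 1)
  first : pts 0 = 0
  last : ∀ l, D ≤ l → pts l = T

/-- Membership in `F_τ`: the rows of `μ` are constant on each segment of `τ`.
The row of index `t : Fin T` corresponds to the observation at time `t + 1`, so the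
`l`-th segment (`1 ≤ l ≤ D`, rows `τ_{l-1}+1, …, τ_l`) consists of the row indices
`j` with `pts (l-1) ≤ j < pts l`. -/
def Segmentation.memF {T p : ℕ} (τ : Segmentation T) (μ : Fin T → Fin p → ℝ) : Prop :=
  ∀ l, l < τ.D → ∀ s t : Fin T,
    τ.pts l ≤ s.1 → s.1 < τ.pts (l + 1) → τ.pts l ≤ t.1 → t.1 < τ.pts (l + 1) →
      μ s = μ t

/-- `‖μ‖_[τ] = (1/T) Σ_{l=1}^{D_τ} I_l ‖μ_{τ_l}‖₁`.  Since the rows of `μ ∈ F_τ` are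
constant on each segment, this equals `(1/T) Σ_{t=1}^{T} ‖μ_t‖₁`, which we take as the
definition (it is then independent of the segmentation). -/
noncomputable def cpNorm {T p : ℕ} (μ : Fin T → Fin p → ℝ) : ℝ :=
  (∑ t, ∑ i, |μ t i|) / T

/-- Squared Frobenius norm `‖μ‖_F²`. -/
noncomputable def frobSq {T p : ℕ} (μ : Fin T → Fin p → ℝ) : ℝ :=
  ∑ t, ∑ i, (μ t i) ^ 2

lemma gaussian_sq_integrable : Integrable (fun y : ℝ => y ^ 2) (gaussianReal 0 1) := by
  have := (memLp_id_gaussianReal (μ := 0) (v := 1) 2).integrable_sq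
  simpa using this

lemma gaussian_sq_integral : ∫ y, y ^ 2 ∂(gaussianReal 0 1) = 1 := by
  have h1 := variance_of_integral_eq_zero (X := id) (μ := gaussianReal 0 1)
    aemeasurable_id (by simp)
  rw [variance_id_gaussianReal] at h1
  simpa using h1.symm

/-- The deterministic core: Cauchy-Schwarz on the columns in `J`, then `2 r x √T ≤ r² + T x²`,
then `√N ≤ (N / c + c) / 2`. -/
lemma ratio_le {T p : ℕ} (hT : 0 < T) (z u : Fin T → Fin p → ℝ) (J : Finset (Fin p))
    (hu : ∀ t i, u t i ≠ 0 → i ∈ J) (x c : ℝ) (hx : 0 < x) (hc : 0 < c) :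
    ((∑ t, ∑ i, z t i * u t i) / T) / (frobSq u / T + x ^ 2)
      ≤ ((∑ t, ∑ i ∈ J, z t i ^ 2) / c + c) / (4 * x * √T) := by
  have hT' : (0 : ℝ) < T := by exact_mod_cast hT
  set N := ∑ t, ∑ i ∈ J, z t i ^ 2 with hN
  have hN0 : 0 ≤ N := by positivity
  have hF0 : 0 ≤ frobSq u := by unfold frobSq; positivity
  have h1 : ∑ t, ∑ i, z t i * u t i = ∑ t, ∑ i ∈ J, z t i * u t i := by
    refine Finset.sum_congr rfl fun t _ => (Finset.sum_subset (Finset.subset_univ _) ?_).symm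
    intro i _ hi
    have : u t i = 0 := by
      by_contra hne
      exact hi (hu t i hne)
    simp [this]
  have h2 : ∑ t, ∑ i ∈ J, u t i ^ 2 ≤ frobSq u := by
    unfold frobSq
    refine Finset.sum_le_sum fun t _ =>
      Finset.sum_le_sum_of_subset_of_nonneg (Finset.subset_univ _) fun _ _ _ => sq_nonneg _
  have hcs : ∑ t, ∑ i, z t i * u t i ≤ √N * √(frobSq u) := by
    rw [h1]
    have := Real.sum_mul_le_sqrt_mul_sqrt (Finset.univ ×ˢ J)
      (fun q : Fin T × Fin p => z q.1 q.2) (fun q => u q.1 q.2)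
    rw [Finset.sum_product, Finset.sum_product, Finset.sum_product] at this
    refine this.trans ?_
    gcongr
  have hq : √(T : ℝ) ^ 2 = T := Real.sq_sqrt hT'.le
  have hs : √N ^ 2 = N := Real.sq_sqrt hN0
  have hr : √(frobSq u) ^ 2 = frobSq u := Real.sq_sqrt hF0
  have hq0 : 0 < √(T : ℝ) := Real.sqrt_pos.2 hT'
  have hs0 := Real.sqrt_nonneg N
  have hr0 := Real.sqrt_nonneg (frobSq u)
  generalize √(T : ℝ) = q at *
  generalize √N = s at *
  generalize √(frobSq u) = r at *
  rw [← hr, ← hq, ← hs]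
  rw [← hs] at hN0
  have step1 : ((∑ t, ∑ i, z t i * u t i) / q ^ 2) / (r ^ 2 / q ^ 2 + x ^ 2)
      ≤ s / (2 * x * q) := by
    have e : ((∑ t, ∑ i, z t i * u t i) / q ^ 2) / (r ^ 2 / q ^ 2 + x ^ 2)
        = (∑ t, ∑ i, z t i * u t i) / (r ^ 2 + q ^ 2 * x ^ 2) := by
      field_simp
    rw [e, div_le_div_iff₀ (by positivity) (by positivity)]
    calc (∑ t, ∑ i, z t i * u t i) * (2 * x * q) ≤ (s * r) * (2 * x * q) := by gcongr
      _ = s * (2 * r * (q * x)) := by ring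
      _ ≤ s * (r ^ 2 + q ^ 2 * x ^ 2) := by
        gcongr
        nlinarith [sq_nonneg (r - q * x)]
  refine step1.trans ?_
  have step2 : 2 * s ≤ s ^ 2 / c + c := by
    rw [div_add' _ _ _ hc.ne', le_div_iff₀ hc]
    nlinarith [sq_nonneg (s - c)]
  calc s / (2 * x * q) = (2 * s) / (4 * x * q) := by
        field_simp
        norm_num
    _ ≤ _ := by gcongr

/-- **Local control of the Gaussian process on variable-selection models**, used in
the proof of Theorem 3 to show that one can take `φ_m(x) = x √D_m`.  With
`W(g) = Tr(ζᵀ g)/T`, `‖g‖_H² = ‖g‖_F²/T`, and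
`S_{(J,τ)} = {μ ∈ F_τ : rows supported in J}`, for every `h ∈ S_{(J,τ)}` and `x > 0`:
`2 E[sup_{g ∈ S_{(J,τ)}} (W(g) - W(h))/(‖g-h‖_H² + x²)] ≤ √|J| / x`. -/
theorem stmt10 (T p : ℕ) (hT : 0 < T) (hp : 0 < p)
    (Ω : Type) [MeasurableSpace Ω] (P : Measure Ω) [IsProbabilityMeasure P]
    (ζ : Ω → Fin T → Fin p → ℝ) (hmeas : Measurable ζ)
    (hiid : Measure.map (fun ω (ti : Fin T × Fin p) => ζ ω ti.1 ti.2) P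
      = Measure.pi fun _ => gaussianReal 0 1)
    (τ : Segmentation T) (J : Finset (Fin p)) (hJ : J.Nonempty)
    (W : (Fin T → Fin p → ℝ) → Ω → ℝ)
    (hW : ∀ g ω, W g ω = (∑ t, ∑ i, ζ ω t i * g t i) / T)
    (SJτ : Set (Fin T → Fin p → ℝ))
    (hSJτ : SJτ = {g | τ.memF g ∧ ∀ (t : Fin T) (i : Fin p), g t i ≠ 0 → i ∈ J})
    (h : Fin T → Fin p → ℝ) (hh : h ∈ SJτ) (x : ℝ) (hx : 0 < x) :
    2 * ∫ ω, (⨆ g ∈ SJτ, (W g ω - W h ω) / (frobSq (g - h) / T + x ^ 2)) ∂P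
      ≤ Real.sqrt J.card / x := by
  classical
  have hT' : (0 : ℝ) < T := by exact_mod_cast hT
  have hJ' : (0 : ℝ) < J.card := by exact_mod_cast hJ.card_pos
  set c : ℝ := √(T * J.card) with hc_def
  have hc : 0 < c := Real.sqrt_pos.2 (by positivity)
  have hc2 : c ^ 2 = T * J.card := Real.sq_sqrt (by positivity)
  have hm : ∀ t i, Measurable fun ω => ζ ω t i := fun t i => by fun_prop
  have hmp : Measurable (fun ω (ti : Fin T × Fin p) => ζ ω ti.1 ti.2) := by
    rw [measurable_pi_iff]
    exact fun q => hm q.1 q.2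
  have hlaw : ∀ t i, Measure.map (fun ω => ζ ω t i) P = gaussianReal 0 1 := by
    intro t i
    have e := (measurePreserving_eval
      (fun _ : Fin T × Fin p => gaussianReal 0 1) (t, i)).map_eq
    rw [← hiid, Measure.map_map (measurable_pi_apply _) hmp] at e
    exact e
  have hint : ∀ t i, Integrable (fun ω => ζ ω t i ^ 2) P := by
    intro t i
    have e := gaussian_sq_integrable
    rw [← hlaw t i] at e
    exact e.comp_measurable (hm t i)
  have hE : ∀ t i, ∫ ω, ζ ω t i ^ 2 ∂P = 1 := by
    intro t i
    rw [← gaussian_sq_integral, ← hlaw t i,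
      integral_map (hm t i).aemeasurable (by fun_prop)]
  have hNint : Integrable (fun ω => ∑ t, ∑ i ∈ J, ζ ω t i ^ 2) P :=
    integrable_finsetSum _ fun t _ => integrable_finsetSum _ fun i _ => hint t i
  have hNE : ∫ ω, (∑ t, ∑ i ∈ J, ζ ω t i ^ 2) ∂P = c ^ 2 := by
    rw [integral_finsetSum _ fun t _ => integrable_finsetSum _ fun i _ => hint t i]
    simp_rw [integral_finsetSum _ fun i _ => hint _ i, hE]
    simp [hc2]
  set B : Ω → ℝ := fun ω => ((∑ t, ∑ i ∈ J, ζ ω t i ^ 2) / c + c) / (4 * x * √T)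
  have hBint : Integrable B P := ((hNint.div_const c).add (integrable_const c)).div_const _
  have hBE : ∫ ω, B ω ∂P = √J.card / (2 * x) := by
    have e : ∫ ω, B ω ∂P = (c ^ 2 / c + c) / (4 * x * √T) := by
      simp only [B]
      rw [integral_div, integral_add (hNint.div_const c) (integrable_const c),
        integral_div, hNE]
      simp
    have hsplit : c = √T * √J.card := Real.sqrt_mul hT'.le _
    have hq0 : 0 < √(T : ℝ) := Real.sqrt_pos.2 hT'
    rw [e, pow_two, mul_div_cancel_right₀ _ hc.ne', hsplit]
    field_simp
    norm_num
  -- The inner supremum over the proof of `g ∈ SJτ` is `0` when `g ∉ SJτ`, and `0 ≤ B ω`.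
  have hle : ∀ ω, (⨆ g ∈ SJτ, (W g ω - W h ω) / (frobSq (g - h) / T + x ^ 2)) ≤ B ω := by
    intro ω
    have hB0 : 0 ≤ B ω := by positivity
    refine Real.iSup_le (fun g => Real.iSup_le (fun hg => ?_) hB0) hB0
    subst hSJτ
    have e : W g ω - W h ω = (∑ t, ∑ i, ζ ω t i * (g - h) t i) / T := by
      simp only [hW, Pi.sub_apply, mul_sub, Finset.sum_sub_distrib, sub_div]
    rw [e]
    refine ratio_le hT (ζ ω) (g - h) J (fun t i hne => ?_) x c hx hc
    by_contra hi
    have hg0 : g t i = 0 := by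
      by_contra h0
      exact hi (hg.2 t i h0)
    have hh0 : h t i = 0 := by
      by_contra h0
      exact hi (hh.2 t i h0)
    exact hne (by simp [hg0, hh0])
  -- A non-integrable supremum would have integral `0`, so its measurability is not needed.
  have hfin : ∫ ω, (⨆ g ∈ SJτ, (W g ω - W h ω) / (frobSq (g - h) / T + x ^ 2)) ∂P
      ≤ √J.card / (2 * x) := by
    by_cases hi : Integrable
        (fun ω => ⨆ g ∈ SJτ, (W g ω - W h ω) / (frobSq (g - h) / T + x ^ 2)) P
    · exact (integral_mono hi hBint hle).trans_eq hBE
    · rw [integral_undef hi]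
      positivity
  calc _ ≤ 2 * (√J.card / (2 * x)) := by gcongr
    _ = √J.card / x := by field_simp
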